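/- Let n ≥ 2 be an integer and let ψ : [0,∞) → [0,∞) be an absolutely continuous decreasing function with ψ(0) = 1 and −1 ≤ ψ'(s) ≤ 0 for almost every s. Suppose A = ∫_0^∞ s^{n−1} ψ(s) ds and B = ∫_0^∞ s^{n+1} ψ(s) ds are both finite, and let a ≥ 0 be a real number satisfying ((a+1)^{n+1} − a^{n+1})/(n+1) = n·A. Then B ≥ (1/n)·(nA)^{(n+2)/n} + S_{n+3}/((n+2)(n+3)) − (nA)^{2/n}·S_{n+1}/(n(n+1)). -/

import Mathlib

open MeasureTheory

/-- The extremal profile. -/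
noncomputable def prof (a s : ℝ) : ℝ := max 0 (min 1 (a + 1 - s))

lemma prof_cont (a : ℝ) : Continuous (prof a) := by
  unfold prof; fun_prop

lemma prof_zero {a s : ℝ} (h : a + 1 ≤ s) : prof a s = 0 := by
  unfold prof
  rw [max_eq_left]
  exact (min_le_right _ _).trans (by linarith)

lemma prof_one {a s : ℝ} (h : s ≤ a) : prof a s = 1 := by
  unfold prof
  rw [min_eq_left (by linarith)]; norm_num

lemma prof_mid {a s : ℝ} (h : a ≤ s) (h' : s ≤ a + 1) : prof a s = a + 1 - s := by
  unfold prof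
  rw [min_eq_right (by linarith), max_eq_right (by linarith)]

lemma prof_integrable (a : ℝ) (k : ℕ) :
    IntegrableOn (fun s => s ^ k * prof a s) (Set.Ioi 0) := by
  have hc : Continuous (fun s => s ^ k * prof a s) := (continuous_pow k).mul (prof_cont a)
  have h1 : IntegrableOn (fun s => s ^ k * prof a s) (Set.Ioc 0 (a + 1)) :=
    (hc.continuousOn.integrableOn_Icc).mono_set Set.Ioc_subset_Icc_self
  refine h1.of_forall_sdiff_eq_zero measurableSet_Ioi ?_
  rintro s ⟨hs, hs'⟩
  have : a + 1 ≤ s := by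
    by_contra hh
    exact hs' ⟨hs, by linarith⟩
  simp [prof_zero this]

lemma prof_integral (a : ℝ) (ha : 0 ≤ a) (k : ℕ) :
    ∫ s in Set.Ioi (0:ℝ), s ^ k * prof a s
      = ((a + 1) ^ (k + 2) - a ^ (k + 2)) / (((k : ℝ) + 1) * ((k : ℝ) + 2)) := by
  have hc : Continuous (fun s => s ^ k * prof a s) := (continuous_pow k).mul (prof_cont a)
  have e1 : ∫ s in Set.Ioi (0:ℝ), s ^ k * prof a s
      = ∫ s in Set.Ioc (0:ℝ) (a + 1), s ^ k * prof a s := by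
    refine setIntegral_eq_of_subset_of_forall_sdiff_eq_zero measurableSet_Ioi
      Set.Ioc_subset_Ioi_self ?_
    rintro s ⟨hs, hs'⟩
    have : a + 1 ≤ s := by
      by_contra hh
      exact hs' ⟨hs, by linarith⟩
    simp [prof_zero this]
  rw [e1, ← intervalIntegral.integral_of_le (by linarith),
    ← intervalIntegral.integral_add_adjacent_intervals (b := a)
      (hc.intervalIntegrable _ _) (hc.intervalIntegrable _ _)]
  have e2 : ∫ s in (0:ℝ)..a, s ^ k * prof a s = ∫ s in (0:ℝ)..a, s ^ k := by
    refine intervalIntegral.integral_congr fun s hs => ?_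
    rw [Set.uIcc_of_le ha] at hs
    simp [prof_one hs.2]
  have e3 : ∫ s in a..(a + 1), s ^ k * prof a s
      = ∫ s in a..(a + 1), ((a + 1) * s ^ k - s ^ (k + 1)) := by
    refine intervalIntegral.integral_congr fun s hs => ?_
    rw [Set.uIcc_of_le (by linarith)] at hs
    simp only [prof_mid hs.1 hs.2]
    ring
  have hc2 : Continuous (fun s : ℝ => (a + 1) * s ^ k) := by fun_prop
  rw [e2, e3, intervalIntegral.integral_sub
    (hc2.intervalIntegrable _ _)
    ((continuous_pow _).intervalIntegrable _ _), intervalIntegral.integral_const_mul,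
    integral_pow, integral_pow, integral_pow]
  push_cast
  have h1 : (k : ℝ) + 1 ≠ 0 := by positivity
  have h2 : (k : ℝ) + 2 ≠ 0 := by positivity
  have h3 : (k : ℝ) + 1 + 1 ≠ 0 := by positivity
  field_simp
  ring

lemma psi_lip (ψ : ℝ → ℝ)
    (hψ_ftc : ∀ t, 0 ≤ t → ψ t = ψ 0 + ∫ s in (0:ℝ)..t, deriv ψ s)
    (hψ_deriv : ∀ᵐ s ∂volume, 0 ≤ s → -1 ≤ deriv ψ s ∧ deriv ψ s ≤ 0)
    {s t : ℝ} (hs : 0 ≤ s) (hst : s ≤ t) : ψ s - (t - s) ≤ ψ t := by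
  have hi : ∀ u v : ℝ, 0 ≤ u → u ≤ v → IntervalIntegrable (deriv ψ) volume u v := by
    intro u v hu huv
    have hcst : IntervalIntegrable (fun _ => (1:ℝ)) volume u v := intervalIntegrable_const
    refine hcst.mono_fun (measurable_deriv ψ).aestronglyMeasurable ?_
    rw [Set.uIoc_of_le huv]
    filter_upwards [ae_restrict_of_ae hψ_deriv, ae_restrict_mem measurableSet_Ioc] with x hx hm
    have := hx (hu.trans hm.1.le)
    rw [Real.norm_eq_abs, norm_one, abs_le]
    exact ⟨this.1, by linarith [this.2]⟩
  have h1 := hψ_ftc s hs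
  have h2 := hψ_ftc t (hs.trans hst)
  have h3 := intervalIntegral.integral_add_adjacent_intervals (hi 0 s le_rfl hs) (hi s t hs hst)
  have h4 : ∫ _ in s..t, (-1:ℝ) ≤ ∫ x in s..t, deriv ψ x := by
    refine intervalIntegral.integral_mono_ae_restrict hst intervalIntegrable_const (hi s t hs hst) ?_
    filter_upwards [ae_restrict_of_ae hψ_deriv, ae_restrict_mem measurableSet_Icc] with x hx hm
    exact (hx (hs.trans hm.1)).1
  simp at h4
  linarith


/-- Lemma (Melas-type) for the Laplacian: lower bound for the second moment `B` of a
decreasing, absolutely continuous function `ψ` on `[0,∞)` with `ψ(0) = 1` and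
`-1 ≤ ψ' ≤ 0` almost everywhere.  Absolute continuity is encoded via the fundamental
theorem of calculus: `ψ t = ψ 0 + ∫_0^t ψ'`. -/
theorem stmt3 (n : ℕ) (hn : 2 ≤ n) (ψ : ℝ → ℝ)
    (hψ_nonneg : ∀ s, 0 ≤ s → 0 ≤ ψ s)
    (hψ_anti : AntitoneOn ψ (Set.Ici 0))
    (hψ0 : ψ 0 = 1)
    (hψ_ftc : ∀ t, 0 ≤ t → ψ t = ψ 0 + ∫ s in (0:ℝ)..t, deriv ψ s)
    (hψ_deriv : ∀ᵐ s ∂volume, 0 ≤ s → -1 ≤ deriv ψ s ∧ deriv ψ s ≤ 0)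
    (A B : ℝ)
    (hA : A = ∫ s in Set.Ioi (0:ℝ), s ^ (n - 1) * ψ s)
    (hAint : IntegrableOn (fun s => s ^ (n - 1) * ψ s) (Set.Ioi 0))
    (hB : B = ∫ s in Set.Ioi (0:ℝ), s ^ (n + 1) * ψ s)
    (hBint : IntegrableOn (fun s => s ^ (n + 1) * ψ s) (Set.Ioi 0))
    (a : ℝ) (ha : 0 ≤ a)
    (haA : ((a + 1) ^ (n + 1) - a ^ (n + 1)) / ((n : ℝ) + 1) = (n : ℝ) * A) :
    B ≥ (1 / (n : ℝ)) * ((n : ℝ) * A) ^ (((n : ℝ) + 2) / (n : ℝ))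
        + ((a + 1) ^ (n + 3) - a ^ (n + 3)) / (((n : ℝ) + 2) * ((n : ℝ) + 3))
        - ((n : ℝ) * A) ^ ((2 : ℝ) / (n : ℝ)) * ((a + 1) ^ (n + 1) - a ^ (n + 1))
            / ((n : ℝ) * ((n : ℝ) + 1)) := by
  have hnR : (0:ℝ) < n := by exact_mod_cast (by omega : 0 < n)
  have hψ1 : ∀ s, 0 ≤ s → ψ s ≤ 1 := fun s hs => by
    rw [← hψ0]; exact hψ_anti (Set.mem_Ici.2 le_rfl) (Set.mem_Ici.2 hs) hs
  -- single crossing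
  have hcross : ∀ s t, 0 ≤ s → s ≤ t → prof a s < ψ s → prof a t ≤ ψ t := by
    intro s t hs hst h
    have ht := hs.trans hst
    rcases le_total (a + 1) t with h1 | h1
    · rw [prof_zero h1]; exact hψ_nonneg t ht
    have h2 : a < s := by
      by_contra hh
      rw [prof_one (not_lt.1 hh)] at h
      linarith [hψ1 s hs]
    rw [prof_mid (by linarith) (by linarith)] at h ⊢
    linarith [psi_lip ψ hψ_ftc hψ_deriv hs hst]
  let P : Set ℝ := {s | 0 ≤ s ∧ prof a s < ψ s} ∪ Set.Ici (a + 1)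
  have hPne : P.Nonempty := ⟨a + 1, Or.inr (Set.mem_Ici.2 le_rfl)⟩
  have hP0 : ∀ s ∈ P, 0 ≤ s := by
    rintro s (h | h)
    · exact h.1
    · have := Set.mem_Ici.1 h; linarith
  have hPb : BddBelow P := ⟨0, fun s hs => hP0 s hs⟩
  obtain ⟨c, hc⟩ : ∃ c, c = sInf P := ⟨_, rfl⟩
  have hc0 : 0 ≤ c := by rw [hc]; exact le_csInf hPne hP0
  have hpt : ∀ s, 0 < s → 0 ≤ (s ^ 2 - c ^ 2) * (ψ s - prof a s) := by
    intro s hs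
    rcases lt_trichotomy s c with h | h | h
    · have : ψ s ≤ prof a s := by
        by_contra hh
        have : sInf P ≤ s := csInf_le hPb (Or.inl ⟨hs.le, not_le.1 hh⟩)
        linarith
      exact mul_nonneg_of_nonpos_of_nonpos (by nlinarith) (by linarith)
    · simp [h]
    · obtain ⟨p, hp, hps⟩ := exists_lt_of_csInf_lt hPne (hc ▸ h)
      have : prof a s ≤ ψ s := by
        rcases hp with hp | hp
        · exact hcross p s hp.1 hps.le hp.2
        · rw [prof_zero ((Set.mem_Ici.1 hp).trans hps.le)]
          exact hψ_nonneg s hs.le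
      exact mul_nonneg (by nlinarith) (by linarith)
  have i1 := prof_integrable a (n - 1)
  have i2 := prof_integrable a (n + 1)
  have key : ∫ s in Set.Ioi (0:ℝ), c ^ 2 * (s ^ (n - 1) * ψ s - s ^ (n - 1) * prof a s)
      ≤ ∫ s in Set.Ioi (0:ℝ), (s ^ (n + 1) * ψ s - s ^ (n + 1) * prof a s) := by
    refine setIntegral_mono_on ((hAint.sub i1).const_mul _) (hBint.sub i2) measurableSet_Ioi ?_
    intro s hs
    have hs : 0 < s := hs
    have e : s ^ (n + 1) = s ^ (n - 1) * s ^ 2 := by rw [← pow_add]; congr 1; omega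
    have := mul_nonneg (pow_nonneg hs.le (n - 1)) (hpt s hs)
    rw [e]
    linarith
  rw [integral_const_mul, integral_sub hAint i1, integral_sub hBint i2, ← hA, ← hB,
    prof_integral a ha, prof_integral a ha] at key
  have hk1 : n - 1 + 2 = n + 1 := by omega
  have hk2 : ((n - 1 : ℕ) : ℝ) = n - 1 := by rw [Nat.cast_sub (by omega)]; simp
  rw [hk1, hk2] at key
  have hA' : ((a + 1) ^ (n + 1) - a ^ (n + 1)) = ((n:ℝ) + 1) * (n * A) := by
    rw [← haA]; field_simp
  have hz : A - (((n:ℝ) + 1) * (n * A)) / (((n:ℝ) - 1 + 1) * ((n:ℝ) - 1 + 2)) = 0 := by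
    have e1 : (n:ℝ) - 1 + 1 = n := by ring
    have e2 : (n:ℝ) - 1 + 2 = n + 1 := by ring
    rw [e1, e2]; field_simp; ring
  rw [hA', hz, mul_zero] at key
  have hApos : 0 < (n:ℝ) * A := by
    rw [← haA]
    refine div_pos (sub_pos.2 (pow_lt_pow_left₀ (by linarith) ha (by omega))) (by positivity)
  have hr : ((n:ℝ) * A) ^ (((n:ℝ) + 2) / (n:ℝ)) = n * A * (n * A) ^ ((2:ℝ) / n) := by
    rw [add_div, div_self hnR.ne', Real.rpow_add hApos, Real.rpow_one]
  rw [hr, hA']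
  have hfin : 1 / (n:ℝ) * (n * A * (n * A) ^ ((2:ℝ) / n))
      = (n * A) ^ ((2:ℝ) / n) * (((n:ℝ) + 1) * (n * A)) / (n * (n + 1)) := by
    field_simp
  rw [hfin]
  push_cast at key
  have e3 : ((n:ℝ) + 1 + 1) * ((n:ℝ) + 1 + 2) = (n + 2) * (n + 3) := by ring
  rw [e3] at key
  have e4 : n + 1 + 2 = n + 3 := rfl
  rw [e4] at key
  linarith
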